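/- arXiv:2602.10932 — 8 statements merged into one kernel-verified Lean document; each statement's English description precedes it below -/
import Mathlib

section
/- (Lock lemma, pointwise form of Lemma 2.1) Let H̲₋ and H̄₊ be positive real numbers and let a ≥ 0 be a real number with H̄₊² − H̲₋² + a² ≥ 0, and set ξ := √(H̄₊² − H̲₋² + a²). Then there exists a real number θ (a hyperbolic rotation angle, independent of H₋ and H₊) such that for all real numbers H₋ and H₊ with H₋ ≥ H̲₋ and H₊ ≤ H̄₊ one has cosh(θ)·H₋ − sinh(θ)·a − H₊ ≥ |cosh(θ)·a − sinh(θ)·H₋ − ξ|. -/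
/-!
In the null coordinates `X₁ ± X₂`, the hyperbolic rotation acts diagonally by `exp (∓θ)`, so with
`ξ = √(Hhi² - Hlo² + a²)` the claim is the pair of inequalities
`exp (-θ) * (Hm + a) ≥ Hp + ξ` and `exp θ * (Hm - a) ≥ Hp - ξ`.
Since `Hlo² - a² = Hhi² - ξ²`, the choice `exp θ = (Hlo + a) / (Hhi + ξ)` makes both equalities at
`Hm = Hlo`, `Hp = Hhi`; both are monotone in the right direction in `Hm` and `Hp`.
-/

/-- Lock lemma, pointwise form of Lemma 2.1. -/
theorem lock_lemma_pointwise (Hlo Hhi a : ℝ)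
    (hHlo : 0 < Hlo) (hHhi : 0 < Hhi) (ha : 0 ≤ a)
    (hnn : Hhi ^ 2 - Hlo ^ 2 + a ^ 2 ≥ 0) :
    ∃ θ : ℝ, ∀ Hm Hp : ℝ, Hlo ≤ Hm → Hp ≤ Hhi →
      Real.cosh θ * Hm - Real.sinh θ * a - Hp ≥
        |Real.cosh θ * a - Real.sinh θ * Hm - Real.sqrt (Hhi ^ 2 - Hlo ^ 2 + a ^ 2)| := by
  have hsq := Real.sq_sqrt hnn
  have hξ := Real.sqrt_nonneg (Hhi ^ 2 - Hlo ^ 2 + a ^ 2)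
  set ξ := Real.sqrt (Hhi ^ 2 - Hlo ^ 2 + a ^ 2)
  have hn : 0 < Hlo + a := by linarith
  have hd : 0 < Hhi + ξ := by linarith
  refine ⟨Real.log ((Hlo + a) / (Hhi + ξ)), fun Hm Hp hm hp => ?_⟩
  have he := Real.exp_log (div_pos hn hd)
  set θ := Real.log ((Hlo + a) / (Hhi + ξ))
  have hplus : Real.exp (-θ) * (Hlo + a) = Hhi + ξ := by
    rw [Real.exp_neg, he]
    field_simp
  have hminus : Real.exp θ * (Hlo - a) = Hhi - ξ := by
    rw [he]
    field_simp
    linarith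
  have h1 := mul_le_mul_of_nonneg_left hm (Real.exp_pos θ).le
  have h2 := mul_le_mul_of_nonneg_left hm (Real.exp_pos (-θ)).le
  rw [Real.cosh_eq, Real.sinh_eq, ge_iff_le, abs_le]
  constructor <;> linarith
end

section
/- (Lock lemma with explicit angle, case a ≠ H̲₋) Let H̲₋ and H̄₊ be positive real numbers, let a ≥ 0 be a real number with a ≠ H̲₋ and H̄₊² − H̲₋² + a² ≥ 0, set ξ := √(H̄₊² − H̲₋² + a²), and set θ := arsinh( (a·H̄₊ − ξ·H̲₋) / (H̲₋² − a²) ). Then for all real numbers H₋ and H₊ with H₋ ≥ H̲₋ and H₊ ≤ H̄₊ one has cosh(θ)·H₋ − sinh(θ)·a − H₊ ≥ |cosh(θ)·a − sinh(θ)·H₋ − ξ|. -/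
/-!
Write `L = Hlo`, `H = Hhi`, `ξ = √(H² - L² + a²)` and `D = L² - a² = H² - ξ²`. The vectors `(L, a)`
and `(H, ξ)` have the same Minkowski norm `D ≠ 0`, and `θ` is the angle of the hyperbolic rotation
carrying the first to the second: `sinh θ = (a H - ξ L) / D` and `cosh θ = (L H - a ξ) / D`
(`cosh_lock_angle`), so that `cosh θ * L - sinh θ * a = H` and `cosh θ * a - sinh θ * L = ξ`.
Subtracting these, the claim becomes `cosh θ * (Hm - L) + (H - Hp) ≥ |sinh θ * (Hm - L)|`, which
follows from `|sinh θ| ≤ cosh θ`.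
-/

/-- The hyperbolic cosine of the lock angle. The numerator `L * H - a * x` has the sign of
`L ^ 2 - a ^ 2`, which selects the positive square root of `1 + sinh θ ^ 2`. -/
theorem cosh_lock_angle {L H a x : ℝ} (hL : 0 < L) (hH : 0 < H) (ha : 0 ≤ a) (hx : 0 ≤ x)
    (hD : L ^ 2 - a ^ 2 ≠ 0) (hx2 : x ^ 2 = H ^ 2 - L ^ 2 + a ^ 2) :
    Real.cosh (Real.arsinh ((a * H - x * L) / (L ^ 2 - a ^ 2))) =
      (L * H - a * x) / (L ^ 2 - a ^ 2) := by
  have hpos : 0 ≤ (L * H - a * x) / (L ^ 2 - a ^ 2) := by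
    rcases lt_or_gt_of_ne hD with h | h
    · have h1 : L ≤ a := by nlinarith
      have h2 : H ≤ x := by nlinarith
      exact div_nonneg_of_nonpos (by nlinarith) h.le
    · have h1 : a ≤ L := by nlinarith
      have h2 : x ≤ H := by nlinarith
      exact div_nonneg (by nlinarith) h.le
  rw [Real.cosh_arsinh, Real.sqrt_eq_iff_mul_self_eq (by positivity) hpos]
  field_simp
  linear_combination (L ^ 2 - a ^ 2) * hx2

/-- Lock lemma with explicit angle, case `a ≠ H̲₋`. -/
theorem lock_lemma_explicit_angle (Hlo Hhi a : ℝ)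
    (hHlo : 0 < Hlo) (hHhi : 0 < Hhi) (ha : 0 ≤ a) (hne : a ≠ Hlo)
    (hnn : Hhi ^ 2 - Hlo ^ 2 + a ^ 2 ≥ 0) :
    ∀ Hm Hp : ℝ, Hlo ≤ Hm → Hp ≤ Hhi →
      Real.cosh (Real.arsinh ((a * Hhi - Real.sqrt (Hhi ^ 2 - Hlo ^ 2 + a ^ 2) * Hlo) /
          (Hlo ^ 2 - a ^ 2))) * Hm -
        Real.sinh (Real.arsinh ((a * Hhi - Real.sqrt (Hhi ^ 2 - Hlo ^ 2 + a ^ 2) * Hlo) /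
          (Hlo ^ 2 - a ^ 2))) * a - Hp ≥
      |Real.cosh (Real.arsinh ((a * Hhi - Real.sqrt (Hhi ^ 2 - Hlo ^ 2 + a ^ 2) * Hlo) /
          (Hlo ^ 2 - a ^ 2))) * a -
        Real.sinh (Real.arsinh ((a * Hhi - Real.sqrt (Hhi ^ 2 - Hlo ^ 2 + a ^ 2) * Hlo) /
          (Hlo ^ 2 - a ^ 2))) * Hm - Real.sqrt (Hhi ^ 2 - Hlo ^ 2 + a ^ 2)| := by
  intro Hm Hp hm hp
  have hD : Hlo ^ 2 - a ^ 2 ≠ 0 := by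
    intro h
    exact hne ((sq_eq_sq₀ ha hHlo.le).1 (by linarith))
  have hx := Real.sqrt_nonneg (Hhi ^ 2 - Hlo ^ 2 + a ^ 2)
  have hx2 := Real.sq_sqrt hnn
  set x := Real.sqrt (Hhi ^ 2 - Hlo ^ 2 + a ^ 2)
  have hc := cosh_lock_angle hHlo hHhi ha hx hD hx2
  have hs := Real.sinh_arsinh ((a * Hhi - x * Hlo) / (Hlo ^ 2 - a ^ 2))
  set θ := Real.arsinh ((a * Hhi - x * Hlo) / (Hlo ^ 2 - a ^ 2))
  have e1 : Real.cosh θ * Hlo - Real.sinh θ * a = Hhi := by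
    rw [hc, hs]; field_simp; ring
  have e2 : Real.cosh θ * a - Real.sinh θ * Hlo = x := by
    rw [hc, hs]; field_simp; ring
  -- `cosh θ ± sinh θ = exp (± θ) > 0` gives `|sinh θ| ≤ cosh θ`.
  have p1 : 0 < Real.cosh θ + Real.sinh θ := by
    rw [Real.cosh_add_sinh]; exact Real.exp_pos _
  have p2 : 0 < Real.cosh θ - Real.sinh θ := by
    rw [Real.cosh_sub_sinh]; exact Real.exp_pos _
  have q1 := mul_nonneg p1.le (sub_nonneg.2 hm)
  have q2 := mul_nonneg p2.le (sub_nonneg.2 hm)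
  rw [ge_iff_le, abs_le]
  constructor <;> linarith
end

section
/- (Lock lemma with explicit angle, case a = H̲₋) Let H̲₋ and H̄₊ be positive real numbers and set θ := log(H̲₋) − log(H̄₊). Then for all real numbers H₋ and H₊ with H₋ ≥ H̲₋ and H₊ ≤ H̄₊ one has cosh(θ)·H₋ − sinh(θ)·H̲₋ − H₊ ≥ |cosh(θ)·H̲₋ − sinh(θ)·H₋ − H̄₊|. -/
/-!
Write `θ = log Hlo - log Hhi`. Since `cosh θ - sinh θ = exp (-θ) = Hhi / Hlo`, both sides vanish
at `Hm = Hlo`, `Hp = Hhi`. In general, the left side is therefore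
`cosh θ * (Hm - Hlo) + (Hhi - Hp)` and the right side is `|sinh θ * (Hm - Hlo)|`, so the claim
follows from `|sinh θ| ≤ cosh θ`.
-/

/-- Lock lemma with explicit angle, case `a = H̲₋`. -/
theorem lock_lemma_log_angle (Hlo Hhi : ℝ) (hHlo : 0 < Hlo) (hHhi : 0 < Hhi) :
    ∀ Hm Hp : ℝ, Hlo ≤ Hm → Hp ≤ Hhi →
      Real.cosh (Real.log Hlo - Real.log Hhi) * Hm -
        Real.sinh (Real.log Hlo - Real.log Hhi) * Hlo - Hp ≥
      |Real.cosh (Real.log Hlo - Real.log Hhi) * Hlo -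
        Real.sinh (Real.log Hlo - Real.log Hhi) * Hm - Hhi| := by
  intro Hm Hp hm hp
  have key : Real.exp (-(Real.log Hlo - Real.log Hhi)) * Hlo = Hhi := by
    rw [neg_sub, Real.exp_sub, Real.exp_log hHlo, Real.exp_log hHhi]
    field_simp
  generalize Real.log Hlo - Real.log Hhi = θ at key ⊢
  rw [← Real.cosh_sub_sinh] at key
  -- The two halves of `|sinh θ| ≤ cosh θ`, scaled by `Hm - Hlo`.
  have h1 : 0 ≤ (Real.cosh θ - Real.sinh θ) * (Hm - Hlo) :=
    mul_nonneg (by rw [Real.cosh_sub_sinh]; positivity) (sub_nonneg.2 hm)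
  have h2 : 0 ≤ (Real.cosh θ + Real.sinh θ) * (Hm - Hlo) :=
    mul_nonneg (by rw [Real.cosh_add_sinh]; positivity) (sub_nonneg.2 hm)
  rw [ge_iff_le, abs_le]
  constructor <;> linarith
end

section
/- (First-component estimate, case 0 ≤ a < H̲₋) Let H̲₋ and H̄₊ be positive real numbers and let a be a real number with 0 ≤ a < H̲₋ and H̄₊² − H̲₋² + a² ≥ 0. Set ξ := √(H̄₊² − H̲₋² + a²) and θ := arsinh( (a·H̄₊ − ξ·H̲₋) / (H̲₋² − a²) ). Then for all real numbers H₋ and H₊ with H₋ ≥ H̲₋ and H₊ ≤ H̄₊ one has (H̲₋² − a²)·( cosh(θ)·H₋ − sinh(θ)·a − H₊ ) ≥ (H₋ − H̲₋)·( H̄₊·H̲₋ − a·ξ ), and moreover H̄₊·H̲₋ − a·ξ > 0. -/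
/-!
Write `D = Hlo² - a² > 0` and `ξ = √(Hhi² - D)`. Since `ξ² = Hhi² - D`,
`(Hhi Hlo - a ξ)² - (a Hhi - ξ Hlo)² = (Hhi² - ξ²) D = D²`,
and `Hhi Hlo - a ξ > 0` because `ξ ≤ Hhi` and `a < Hlo`. Hence `sinh θ = (a Hhi - ξ Hlo) / D` forces
`cosh θ = (Hhi Hlo - a ξ) / D`, and the left-hand side of the estimate equals
`(Hm - Hlo) (Hhi Hlo - a ξ) + D (Hhi - Hp)`, whose last term is nonnegative.
-/

/-- First-component estimate, case `0 ≤ a < H̲₋`. -/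
theorem lock_first_component_lt (Hlo Hhi a : ℝ)
    (hHlo : 0 < Hlo) (hHhi : 0 < Hhi) (ha : 0 ≤ a) (halt : a < Hlo)
    (hnn : Hhi ^ 2 - Hlo ^ 2 + a ^ 2 ≥ 0) :
    (∀ Hm Hp : ℝ, Hlo ≤ Hm → Hp ≤ Hhi →
      (Hlo ^ 2 - a ^ 2) *
        (Real.cosh (Real.arsinh ((a * Hhi - Real.sqrt (Hhi ^ 2 - Hlo ^ 2 + a ^ 2) * Hlo) /
            (Hlo ^ 2 - a ^ 2))) * Hm -
          Real.sinh (Real.arsinh ((a * Hhi - Real.sqrt (Hhi ^ 2 - Hlo ^ 2 + a ^ 2) * Hlo) /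
            (Hlo ^ 2 - a ^ 2))) * a - Hp) ≥
        (Hm - Hlo) * (Hhi * Hlo - a * Real.sqrt (Hhi ^ 2 - Hlo ^ 2 + a ^ 2))) ∧
      Hhi * Hlo - a * Real.sqrt (Hhi ^ 2 - Hlo ^ 2 + a ^ 2) > 0 := by
  have hD : 0 < Hlo ^ 2 - a ^ 2 := by nlinarith
  have hs0 := Real.sqrt_nonneg (Hhi ^ 2 - Hlo ^ 2 + a ^ 2)
  have hs2 := Real.sq_sqrt hnn
  set s := Real.sqrt (Hhi ^ 2 - Hlo ^ 2 + a ^ 2)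
  have hsh : s ≤ Hhi := by
    exact Real.sqrt_le_iff.mpr ⟨hHhi.le, by linarith⟩
  have hpos : 0 < Hhi * Hlo - a * s := by
    have h1 : a * s ≤ a * Hhi := mul_le_mul_of_nonneg_left hsh ha
    have h2 : a * Hhi < Hlo * Hhi := mul_lt_mul_of_pos_right halt hHhi
    linarith
  refine ⟨fun Hm Hp hm hp => ?_, hpos⟩
  have hcosh : Real.cosh (Real.arsinh ((a * Hhi - s * Hlo) / (Hlo ^ 2 - a ^ 2))) =
      (Hhi * Hlo - a * s) / (Hlo ^ 2 - a ^ 2) := by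
    rw [Real.cosh_arsinh, Real.sqrt_eq_iff_mul_self_eq (by positivity) (by positivity)]
    field_simp
    linear_combination (Hlo ^ 2 - a ^ 2) * hs2
  rw [hcosh, Real.sinh_arsinh]
  have key : (Hlo ^ 2 - a ^ 2) * ((Hhi * Hlo - a * s) / (Hlo ^ 2 - a ^ 2) * Hm -
      (a * Hhi - s * Hlo) / (Hlo ^ 2 - a ^ 2) * a - Hp) =
      (Hm - Hlo) * (Hhi * Hlo - a * s) + (Hlo ^ 2 - a ^ 2) * (Hhi - Hp) := by
    field_simp
    ring
  rw [key]
  have := mul_nonneg hD.le (sub_nonneg.mpr hp)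
  linarith
end

section
/- (Second-component identity, case 0 ≤ a < H̲₋) Let H̲₋ and H̄₊ be positive real numbers and let a be a real number with 0 ≤ a < H̲₋ and H̄₊² − H̲₋² + a² ≥ 0. Set ξ := √(H̄₊² − H̲₋² + a²) and θ := arsinh( (a·H̄₊ − ξ·H̲₋) / (H̲₋² − a²) ). Then for every real number H₋ one has (H̲₋² − a²)·( cosh(θ)·a − sinh(θ)·H₋ − ξ ) = (H₋ − H̲₋)·( ξ·H̲₋ − a·H̄₊ ). -/
/-! Write `D = Hlo² - a² > 0` and `ξ = √(Hhi² - D)`, so that `D sinh θ = a Hhi - ξ Hlo`. The identity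
`(Hhi Hlo - a ξ)² - (a Hhi - ξ Hlo)² = (Hhi² - ξ²) (Hlo² - a²) = D²`, together with
`Hhi Hlo - a ξ ≥ 0` (from `ξ ≤ Hhi` and `a < Hlo`), gives `D cosh θ = Hhi Hlo - a ξ`.
The claim is then linear in `D cosh θ` and `D sinh θ`. -/

/-- Second-component identity, case `0 ≤ a < H̲₋`. -/
theorem lock_second_component_lt (Hlo Hhi a : ℝ)
    (hHlo : 0 < Hlo) (hHhi : 0 < Hhi) (ha : 0 ≤ a) (halt : a < Hlo)
    (hnn : Hhi ^ 2 - Hlo ^ 2 + a ^ 2 ≥ 0) :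
    ∀ Hm : ℝ,
      (Hlo ^ 2 - a ^ 2) *
        (Real.cosh (Real.arsinh ((a * Hhi - Real.sqrt (Hhi ^ 2 - Hlo ^ 2 + a ^ 2) * Hlo) /
            (Hlo ^ 2 - a ^ 2))) * a -
          Real.sinh (Real.arsinh ((a * Hhi - Real.sqrt (Hhi ^ 2 - Hlo ^ 2 + a ^ 2) * Hlo) /
            (Hlo ^ 2 - a ^ 2))) * Hm - Real.sqrt (Hhi ^ 2 - Hlo ^ 2 + a ^ 2)) =
      (Hm - Hlo) * (Real.sqrt (Hhi ^ 2 - Hlo ^ 2 + a ^ 2) * Hlo - a * Hhi) := by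
  intro Hm
  have hD : 0 < Hlo ^ 2 - a ^ 2 := by nlinarith
  have hξ0 := Real.sqrt_nonneg (Hhi ^ 2 - Hlo ^ 2 + a ^ 2)
  have hξ2 := Real.sq_sqrt hnn
  set ξ := Real.sqrt (Hhi ^ 2 - Hlo ^ 2 + a ^ 2)
  have hξle : ξ ≤ Hhi := by nlinarith
  have hC : 0 ≤ (Hhi * Hlo - a * ξ) / (Hlo ^ 2 - a ^ 2) :=
    div_nonneg (by nlinarith [mul_le_mul halt.le hξle hξ0 hHlo.le]) hD.le
  have hcosh : Real.cosh (Real.arsinh ((a * Hhi - ξ * Hlo) / (Hlo ^ 2 - a ^ 2))) =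
      (Hhi * Hlo - a * ξ) / (Hlo ^ 2 - a ^ 2) := by
    rw [Real.cosh_arsinh, ← Real.sqrt_sq hC]
    congr 1
    field_simp
    linear_combination (Hlo ^ 2 - a ^ 2) * hξ2
  rw [hcosh, Real.sinh_arsinh]
  field_simp
  ring
end

section
/- (First-component estimate, case a > H̲₋) Let H̲₋ and H̄₊ be positive real numbers and let a be a real number with a > H̲₋. Set ξ := √(H̄₊² − H̲₋² + a²) and θ := arsinh( (a·H̄₊ − ξ·H̲₋) / (H̲₋² − a²) ). Then for all real numbers H₋ and H₊ with H₋ ≥ H̲₋ and H₊ ≤ H̄₊ one has (a² − H̲₋²)·( cosh(θ)·H₋ − sinh(θ)·a − H₊ ) ≥ (H₋ − H̲₋)·( a·ξ − H̄₊·H̲₋ ) ≥ (H₋ − H̲₋)·| a·H̄₊ − ξ·H̲₋ |. -/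
/-!
With `ξ ^ 2 = Hhi ^ 2 - Hlo ^ 2 + a ^ 2`, the identity
`(a * ξ - Hhi * Hlo) ^ 2 - (a * Hhi - ξ * Hlo) ^ 2 = (a ^ 2 - Hlo ^ 2) ^ 2` holds, and
`a * ξ > Hhi * Hlo` because `a > Hlo` and `ξ > Hhi`. Hence
`cosh θ = (a * ξ - Hhi * Hlo) / (a ^ 2 - Hlo ^ 2)`, and the left side of the first inequality exceeds
its right side by exactly `(a ^ 2 - Hlo ^ 2) * (Hhi - Hp) ≥ 0`. The second inequality follows from
the same identity, since its right-hand side is nonnegative.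
-/

/-- First-component estimate, case `a > H̲₋`. -/
theorem lock_first_component_gt (Hlo Hhi a : ℝ)
    (hHlo : 0 < Hlo) (hHhi : 0 < Hhi) (hagt : Hlo < a) :
    ∀ Hm Hp : ℝ, Hlo ≤ Hm → Hp ≤ Hhi →
      (a ^ 2 - Hlo ^ 2) *
        (Real.cosh (Real.arsinh ((a * Hhi - Real.sqrt (Hhi ^ 2 - Hlo ^ 2 + a ^ 2) * Hlo) /
            (Hlo ^ 2 - a ^ 2))) * Hm -
          Real.sinh (Real.arsinh ((a * Hhi - Real.sqrt (Hhi ^ 2 - Hlo ^ 2 + a ^ 2) * Hlo) /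
            (Hlo ^ 2 - a ^ 2))) * a - Hp) ≥
        (Hm - Hlo) * (a * Real.sqrt (Hhi ^ 2 - Hlo ^ 2 + a ^ 2) - Hhi * Hlo) ∧
      (Hm - Hlo) * (a * Real.sqrt (Hhi ^ 2 - Hlo ^ 2 + a ^ 2) - Hhi * Hlo) ≥
        (Hm - Hlo) * |a * Hhi - Real.sqrt (Hhi ^ 2 - Hlo ^ 2 + a ^ 2) * Hlo| := by
  intro Hm Hp hm hp
  set ξ := Real.sqrt (Hhi ^ 2 - Hlo ^ 2 + a ^ 2) with hξ
  have hD : 0 < a ^ 2 - Hlo ^ 2 := by nlinarith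
  have hξsq : ξ ^ 2 = Hhi ^ 2 - Hlo ^ 2 + a ^ 2 :=
    Real.sq_sqrt (by nlinarith [sq_nonneg Hhi])
  have hξgt : Hhi < ξ := Real.lt_sqrt_of_sq_lt (by linarith)
  have hC : 0 < a * ξ - Hhi * Hlo := by nlinarith [mul_pos hHlo hHhi]
  have hyp : (a * ξ - Hhi * Hlo) ^ 2 - (a * Hhi - ξ * Hlo) ^ 2 = (a ^ 2 - Hlo ^ 2) ^ 2 := by
    linear_combination (a ^ 2 - Hlo ^ 2) * hξsq
  have hneg : Hlo ^ 2 - a ^ 2 ≠ 0 := by linarith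
  have hcosh : Real.cosh (Real.arsinh ((a * Hhi - ξ * Hlo) / (Hlo ^ 2 - a ^ 2))) =
      (a * ξ - Hhi * Hlo) / (a ^ 2 - Hlo ^ 2) := by
    rw [Real.cosh_arsinh, Real.sqrt_eq_iff_mul_self_eq_of_pos (div_pos hC hD), ← pow_two]
    have hD' := hD.ne'
    rw [← neg_sub (a ^ 2) (Hlo ^ 2), div_neg, neg_sq, div_pow, div_pow]
    field_simp
    linear_combination hyp
  constructor
  · rw [hcosh, Real.sinh_arsinh]
    have key : (a ^ 2 - Hlo ^ 2) * ((a * ξ - Hhi * Hlo) / (a ^ 2 - Hlo ^ 2) * Hm -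
        (a * Hhi - ξ * Hlo) / (Hlo ^ 2 - a ^ 2) * a - Hp) =
        (Hm - Hlo) * (a * ξ - Hhi * Hlo) + (a ^ 2 - Hlo ^ 2) * (Hhi - Hp) := by
      have hD' := hD.ne'
      rw [← neg_sub (a ^ 2) (Hlo ^ 2), div_neg]
      field_simp
      ring
    rw [key]
    linarith [mul_nonneg hD.le (sub_nonneg.2 hp)]
  · refine mul_le_mul_of_nonneg_left ?_ (sub_nonneg.2 hm)
    exact abs_le_of_sq_le_sq (by nlinarith [sq_nonneg (a ^ 2 - Hlo ^ 2)]) hC.le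
end

section
/- (Lock lemma with vanishing target, used at interfaces beyond Λ') Let H̲₋ and H̄₊ be positive real numbers and let a ≥ 0 be a real number with H̄₊² ≤ H̲₋² − a². Then there exists a real number θ such that for all real numbers H₋ and H₊ with H₋ ≥ H̲₋ and H₊ ≤ H̄₊ one has cosh(θ)·H₋ − sinh(θ)·a − H₊ ≥ |cosh(θ)·a − sinh(θ)·H₋|. -/
/-!
In light-cone form the inequality splits into `exp θ * (Hm - a) ≥ Hp` and
`exp (-θ) * (Hm + a) ≥ Hp`. The choice `exp θ = Hhi / (Hlo - a)` makes the first one an equality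
at the extreme values `Hm = Hlo`, `Hp = Hhi`, and there the second one reads
`(Hlo - a) * (Hlo + a) ≥ Hhi ^ 2`, which is the hypothesis.
-/

/-- Lock lemma with vanishing target. -/
theorem lock_lemma_vanishing_target (Hlo Hhi a : ℝ)
    (hHlo : 0 < Hlo) (hHhi : 0 < Hhi) (ha : 0 ≤ a)
    (hle : Hhi ^ 2 ≤ Hlo ^ 2 - a ^ 2) :
    ∃ θ : ℝ, ∀ Hm Hp : ℝ, Hlo ≤ Hm → Hp ≤ Hhi →
      Real.cosh θ * Hm - Real.sinh θ * a - Hp ≥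
        |Real.cosh θ * a - Real.sinh θ * Hm| := by
  have hd : 0 < Hlo - a := by nlinarith [sq_nonneg Hhi]
  refine ⟨Real.log (Hhi / (Hlo - a)), fun Hm Hp hm hp => ?_⟩
  have hE : Real.exp (Real.log (Hhi / (Hlo - a))) = Hhi / (Hlo - a) :=
    Real.exp_log (div_pos hHhi hd)
  have hE' : Real.exp (-Real.log (Hhi / (Hlo - a))) = (Hlo - a) / Hhi := by
    rw [Real.exp_neg, hE, inv_div]
  have h1 : Hhi ≤ Hhi / (Hlo - a) * (Hm - a) := by
    rw [div_mul_eq_mul_div, le_div_iff₀ hd]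
    exact mul_le_mul_of_nonneg_left (by linarith) hHhi.le
  have h2 : Hhi ≤ (Hlo - a) / Hhi * (Hm + a) := by
    rw [div_mul_eq_mul_div, le_div_iff₀ hHhi]
    nlinarith [mul_le_mul_of_nonneg_left hm hd.le]
  rw [Real.cosh_eq, Real.sinh_eq, hE, hE', ge_iff_le, abs_le]
  constructor <;> linarith
end

section
/- (Lock chain: combinatorial core of Theorem 1.1) Let N ≥ 2 be a natural number, let Λ be a natural number with 1 ≤ Λ < N, and let H̲₁,…,H̲_N and H̄₁,…,H̄_N be positive real numbers such that H̲ᵢ ≤ H̄ᵢ for 1 ≤ i ≤ Λ, H̲ᵢ ≥ H̄ᵢ for Λ+1 ≤ i ≤ N, and Σ_{i=1}^N (H̲ᵢ² − H̄ᵢ²) ≥ 0. Then there exist real numbers c₀, c₁, …, c_N with c_ℓ ≥ 0 for all ℓ, c₀ = 0 and c_N = 0, and real numbers θ₁, …, θ_N, such that for every ℓ ∈ {1,…,N} and all real numbers H₋ and H₊ with H₋ ≥ H̲_ℓ and H₊ ≤ H̄_ℓ one has cosh(θ_ℓ)·H₋ − sinh(θ_ℓ)·c_{ℓ−1} − H₊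 ≥ |cosh(θ_ℓ)·c_{ℓ−1} − sinh(θ_ℓ)·H₋ − c_ℓ|. -/
/-!
In the light-cone coordinates `H + c`, `H - c` the hyperbolic rotation by `θ` acts by the scalars
`exp (-θ)`, `exp θ`, and "first component at least the absolute value of the second" becomes
nonnegativity of both coordinates. Choosing `θ` so that the first light-cone coordinate of the
rotated vector `(Hlo, c')` equals `Hhi + c`, the second one is nonnegative as soon as
`c' ^ 2 + (Hhi ^ 2 - Hlo ^ 2) ≤ c ^ 2` (`exists_rotation`); no case distinction between timelike,
null and spacelike vectors is needed.

It remains to find `c`. Let `S ℓ` be the partial sums of `Hhi ^ 2 - Hlo ^ 2` and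
`c ℓ = √(S ℓ)`, whose square is `max (S ℓ) 0`. Up to `Λ` the sums are nonnegative, and after `Λ` the
increments are nonpositive, so the required inequality between consecutive squares always holds;
`S N ≤ 0` gives `c N = 0`.
-/

/-- One step of the chain: a growth condition on the squares of the coefficients suffices for the
existence of a rotation angle. -/
lemma exists_rotation {a b c' c : ℝ} (ha : 0 < a) (hb : 0 < b) (hc' : 0 ≤ c') (hc : 0 ≤ c)
    (h : c' ^ 2 + (b ^ 2 - a ^ 2) ≤ c ^ 2) :
    ∃ θ : ℝ, ∀ Hm Hp : ℝ, a ≤ Hm → Hp ≤ b →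
      Real.cosh θ * Hm - Real.sinh θ * c' - Hp ≥ |Real.cosh θ * c' - Real.sinh θ * Hm - c| := by
  have hac : 0 < a + c' := by linarith
  have hbc : 0 < b + c := by linarith
  refine ⟨Real.log ((a + c') / (b + c)), fun Hm Hp hm hp => ?_⟩
  set θ := Real.log ((a + c') / (b + c))
  have hexp : Real.exp θ = (a + c') / (b + c) := Real.exp_log (div_pos hac hbc)
  have hexpn : Real.exp (-θ) = (b + c) / (a + c') := by rw [Real.exp_neg, hexp, inv_div]
  have plus_base : Real.exp (-θ) * (a + c') = b + c := by
    rw [hexpn]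
    field_simp
  have minus_base : b - c ≤ Real.exp θ * (a - c') := by
    rw [hexp, div_mul_eq_mul_div, le_div_iff₀ hbc]
    nlinarith
  have plus_mono : Real.exp (-θ) * (a + c') ≤ Real.exp (-θ) * (Hm + c') := by gcongr
  have minus_mono : Real.exp θ * (a - c') ≤ Real.exp θ * (Hm - c') := by gcongr
  rw [Real.cosh_eq, Real.sinh_eq, ge_iff_le, abs_le]
  constructor <;> linarith

/-- Lock chain: combinatorial core of Theorem 1.1. -/
theorem lock_chain (N Λ : ℕ) (Hlo Hhi : ℕ → ℝ)
    (hN : 2 ≤ N) (hΛ1 : 1 ≤ Λ) (hΛN : Λ < N)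
    (hpos_lo : ∀ i, 1 ≤ i → i ≤ N → 0 < Hlo i)
    (hpos_hi : ∀ i, 1 ≤ i → i ≤ N → 0 < Hhi i)
    (hle : ∀ i, 1 ≤ i → i ≤ Λ → Hlo i ≤ Hhi i)
    (hge : ∀ i, Λ + 1 ≤ i → i ≤ N → Hhi i ≤ Hlo i)
    (htotal : 0 ≤ ∑ i ∈ Finset.Icc 1 N, (Hlo i ^ 2 - Hhi i ^ 2)) :
    ∃ c θ : ℕ → ℝ, (∀ ℓ, ℓ ≤ N → 0 ≤ c ℓ) ∧ c 0 = 0 ∧ c N = 0 ∧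
      ∀ ℓ, 1 ≤ ℓ → ℓ ≤ N → ∀ Hm Hp : ℝ, Hlo ℓ ≤ Hm → Hp ≤ Hhi ℓ →
        Real.cosh (θ ℓ) * Hm - Real.sinh (θ ℓ) * c (ℓ - 1) - Hp ≥
          |Real.cosh (θ ℓ) * c (ℓ - 1) - Real.sinh (θ ℓ) * Hm - c ℓ| := by
  let S : ℕ → ℝ := fun k => ∑ i ∈ Finset.Icc 1 k, (Hhi i ^ 2 - Hlo i ^ 2)
  have S_succ : ∀ k, S (k + 1) = S k + (Hhi (k + 1) ^ 2 - Hlo (k + 1) ^ 2) := fun k =>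
    Finset.sum_Icc_succ_top (by omega) _
  have S_nonneg : ∀ k ≤ Λ, 0 ≤ S k := fun k hk => Finset.sum_nonneg fun i hi => by
    rw [Finset.mem_Icc] at hi
    have h₁ := hle i hi.1 (by omega)
    have h₂ := hpos_lo i hi.1 (by omega)
    nlinarith
  have S_N : S N ≤ 0 := by
    have : S N = -∑ i ∈ Finset.Icc 1 N, (Hlo i ^ 2 - Hhi i ^ 2) := by
      simp only [S, ← Finset.sum_neg_distrib, neg_sub]
    linarith
  have step : ∀ ℓ, ∃ θ : ℝ, 1 ≤ ℓ → ℓ ≤ N → ∀ Hm Hp : ℝ, Hlo ℓ ≤ Hm → Hp ≤ Hhi ℓ →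
      Real.cosh θ * Hm - Real.sinh θ * √(S (ℓ - 1)) - Hp ≥
        |Real.cosh θ * √(S (ℓ - 1)) - Real.sinh θ * Hm - √(S ℓ)| := by
    intro ℓ
    by_cases hℓ : 1 ≤ ℓ ∧ ℓ ≤ N
    · obtain ⟨k, rfl⟩ : ∃ k, ℓ = k + 1 := ⟨ℓ - 1, by omega⟩
      have hlo := hpos_lo _ hℓ.1 hℓ.2
      have hhi := hpos_hi _ hℓ.1 hℓ.2
      have growth : √(S k) ^ 2 + (Hhi (k + 1) ^ 2 - Hlo (k + 1) ^ 2) ≤ √(S (k + 1)) ^ 2 := by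
        rcases le_total 0 (S k) with hS | hS
        · rw [Real.sq_sqrt hS, ← S_succ, Real.sq_sqrt']
          exact le_max_left _ _
        · rw [Real.sqrt_eq_zero_of_nonpos hS]
          rcases le_or_gt (k + 1) Λ with hk | hk
          · -- Here `S k = 0`, since `S k` is also nonnegative.
            have h₀ := S_nonneg k (by omega)
            rw [Real.sq_sqrt (S_nonneg _ hk), S_succ]
            linarith
          · have hd := hge (k + 1) (by omega) hℓ.2
            nlinarith [sq_nonneg √(S (k + 1))]
      obtain ⟨θ, hθ⟩ := exists_rotation hlo hhi (Real.sqrt_nonneg _) (Real.sqrt_nonneg _) growth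
      exact ⟨θ, fun _ _ => hθ⟩
    · exact ⟨0, fun h₁ h₂ => absurd ⟨h₁, h₂⟩ hℓ⟩
  choose θ hθ using step
  exact ⟨fun ℓ => √(S ℓ), θ, fun ℓ _ => Real.sqrt_nonneg _, by simp [S],
    Real.sqrt_eq_zero_of_nonpos S_N, hθ⟩
end
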